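/- Fix an integer n ≥ 0 and an integer d with −n ≤ d ≤ n+1. Let s = n if d ≡ n (mod 2) and s = n+1 otherwise, and let k = ⌊(n+d)/2⌋. Define f : ℕ → ℕ by f(m) = N(n, (s−d)/2 + m, (s+d)/2 + m). Then for every integer j with 0 ≤ j ≤ k, the j-th forward difference of f at 0 satisfies (Δ^j f)(0) = f(0) · C(k, j), where C denotes the binomial coefficient. (The leading terms of the successive difference sequences of each diagonal of M_n are in binomial-coefficient ratio.) -/

import Mathlib

/-- A word (list over `ℕ`) is down-up alternating if `w 1 > w 2 < w 3 > w 4 < ⋯`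
(1-indexed). -/
def DownUpAlt (w : List ℕ) : Prop :=
  ∀ k : ℕ, k + 1 < w.length →
    if k % 2 = 0 then w.getD (k + 1) 0 < w.getD k 0 else w.getD k 0 < w.getD (k + 1) 0

/-- `N3 a b c` is the number of down-up alternating words over `{1,2,3}` that are
empty or have first letter `≥ 2`, containing exactly `a` ones, `b` twos and
`c` threes (it is `0` if some argument is negative). -/
noncomputable def N3 (a b c : ℤ) : ℕ :=
  Nat.card {w : List ℕ // (∀ x ∈ w, 1 ≤ x ∧ x ≤ 3) ∧ DownUpAlt w ∧
    (w = [] ∨ 2 ≤ w.headI) ∧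
    (w.count 1 : ℤ) = a ∧ (w.count 2 : ℤ) = b ∧ (w.count 3 : ℤ) = c}

/-- Forward difference of an integer sequence. -/
def fdiff (f : ℕ → ℤ) : ℕ → ℤ := fun m => f (m + 1) - f m

/-!
Cut an alternating word of even length into descents `21`, `31`, `32`: the only constraint left is
that `32` is never followed by `21`. If `x`, `y`, `z` count the three descents, the word has `x + y`
ones, `x + z` twos and `y + z` threes, so `z` moves along a diagonal while `x` and `y` stay fixed.
Order the `21`s and `31`s freely, in `(x + y).choose x` ways; each `32` then goes in front of a `31`
or at the end, in `(y + 1).multichoose z` ways. A word of odd length becomes one of even length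
after appending a `1`; now the end is forbidden to `32`, leaving `y.multichoose z` ways. Either way
a diagonal is a multiple of `m ↦ (k + 1).multichoose m = (m + k).choose k`, whose Newton expansion
`∑ i, k.choose i * m.choose i` (Vandermonde) displays its differences at `0`.
-/

open Function

theorem encard_append_singleton_image {α : Type*} (a : α) (S : Set (List α)) :
    ((· ++ [a]) '' S).encard = S.encard :=
  (List.append_left_injective [a]).encard_image S

/-- A descent between two letters of `{1,2,3}`: the alternating words of even length are
concatenations of descents. -/
inductive Descent
  | twoOne
  | threeOne
  | threeTwo
  deriving DecidableEq

namespace Descent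

/-- The first, larger letter of a descent. -/
def top : Descent → ℕ
  | twoOne => 2
  | threeOne => 3
  | threeTwo => 3

/-- The second, smaller letter of a descent. -/
def bottom : Descent → ℕ
  | twoOne => 1
  | threeOne => 1
  | threeTwo => 2

/-- The word obtained by concatenating a list of descents. -/
def word (l : List Descent) : List ℕ := l.flatMap fun e => [e.top, e.bottom]

/-- The lists of descents whose word is alternating. -/
def IsAlternating (l : List Descent) : Prop := l.IsChain fun e e' => e.bottom < e'.top

/-- The alternating lists of `x` descents `21`, `y` descents `31` and `z` descents `32`. -/
def chains (x y z : ℕ) : Set (List Descent) :=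
  {l | IsAlternating l ∧
    l.count twoOne = x ∧ l.count threeOne = y ∧ l.count threeTwo = z}

/-- The members of `chains x y z` whose word is empty or ends in `1`. -/
def chainsToOne (x y z : ℕ) : Set (List Descent) :=
  {l ∈ chains x y z | threeTwo ∉ l.getLast?}

theorem bottom_lt_top_iff (e e' : Descent) :
    e.bottom < e'.top ↔ ¬(e = threeTwo ∧ e' = twoOne) := by
  cases e <;> cases e' <;> simp [top, bottom]

theorem isAlternating_append_singleton (l : List Descent) (e : Descent) :
    IsAlternating (l ++ [e]) ↔ IsAlternating l ∧ ¬(threeTwo ∈ l.getLast? ∧ e = twoOne) := by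
  rw [IsAlternating, List.isChain_append, IsAlternating]
  cases l.getLast? <;> simp [bottom_lt_top_iff]

section Counting

variable (x y z : ℕ)

theorem chains_zero : chains x y 0 = chainsToOne x y 0 := by
  ext l
  refine ⟨fun hl => ⟨hl, fun h => ?_⟩, fun hl => hl.1⟩
  exact List.count_eq_zero.1 hl.2.2.2 (List.mem_of_getLast? h)

theorem append_twoOne_mem_chainsToOne {l : List Descent} :
    l ++ [twoOne] ∈ chainsToOne (x + 1) y z ↔ l ∈ chainsToOne x y z := by
  simp [chainsToOne, chains, isAlternating_append_singleton, and_right_comm]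

theorem append_threeOne_mem_chainsToOne {l : List Descent} :
    l ++ [threeOne] ∈ chainsToOne x (y + 1) z ↔ l ∈ chains x y z := by
  simp [chainsToOne, chains, isAlternating_append_singleton]

theorem append_threeTwo_mem_chains {l : List Descent} :
    l ++ [threeTwo] ∈ chains x y (z + 1) ↔ l ∈ chains x y z := by
  simp [chains, isAlternating_append_singleton]

theorem chains_succ :
    chains x y (z + 1) = chainsToOne x y (z + 1) ∪ (· ++ [threeTwo]) '' chains x y z := by
  ext l
  rcases l.eq_nil_or_concat' with rfl | ⟨l, e, rfl⟩
  · simp [chainsToOne]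
  · cases e <;> simp [chainsToOne, append_threeTwo_mem_chains]

theorem chainsToOne_zero_zero : chainsToOne 0 0 z = {l | l = [] ∧ z = 0} := by
  ext l
  rcases l.eq_nil_or_concat' with rfl | ⟨l, e, rfl⟩
  · simp [chainsToOne, chains, IsAlternating, eq_comm]
  · cases e <;> simp [chainsToOne, chains]

theorem chainsToOne_succ_zero :
    chainsToOne (x + 1) 0 z = (· ++ [twoOne]) '' chainsToOne x 0 z := by
  ext l
  rcases l.eq_nil_or_concat' with rfl | ⟨l, e, rfl⟩
  · simp [chainsToOne, chains]
  · cases e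
    · simp [append_twoOne_mem_chainsToOne]
    · simp [chainsToOne, chains]
    · simp [chainsToOne]

theorem chainsToOne_zero_succ :
    chainsToOne 0 (y + 1) z = (· ++ [threeOne]) '' chains 0 y z := by
  ext l
  rcases l.eq_nil_or_concat' with rfl | ⟨l, e, rfl⟩
  · simp [chainsToOne, chains]
  · cases e
    · simp [chainsToOne, chains]
    · simp [append_threeOne_mem_chainsToOne]
    · simp [chainsToOne]

theorem chainsToOne_succ_succ :
    chainsToOne (x + 1) (y + 1) z =
      (· ++ [twoOne]) '' chainsToOne x (y + 1) z ∪ (· ++ [threeOne]) '' chains (x + 1) y z := by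
  ext l
  rcases l.eq_nil_or_concat' with rfl | ⟨l, e, rfl⟩
  · simp [chainsToOne, chains]
  · cases e
    · simp [append_twoOne_mem_chainsToOne]
    · simp [append_threeOne_mem_chainsToOne]
    · simp [chainsToOne]

theorem encard_chains_of_encard_chainsToOne {x y c : ℕ}
    (h : ∀ z, (chainsToOne x y z).encard = (c * y.multichoose z : ℕ)) (z : ℕ) :
    (chains x y z).encard = (c * (y + 1).multichoose z : ℕ) := by
  induction z with
  | zero => simpa [chains_zero] using h 0
  | succ z ih =>
    have hdisj : Disjoint (chainsToOne x y (z + 1)) ((· ++ [threeTwo]) '' chains x y z) := by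
      rw [Set.disjoint_right]
      rintro _ ⟨l, -, rfl⟩ hl
      simp [chainsToOne] at hl
    rw [chains_succ, Set.encard_union_eq hdisj, encard_append_singleton_image, h, ih,
      Nat.multichoose_succ_succ]
    push_cast
    ring

theorem encard_chainsToOne :
    (chainsToOne x y z).encard = ((x + y).choose x * y.multichoose z : ℕ) := by
  induction y generalizing x z with
  | zero =>
    induction x with
    | zero => cases z <;> simp [chainsToOne_zero_zero]
    | succ x ih =>
      rw [chainsToOne_succ_zero, encard_append_singleton_image, ih]
      simp
  | succ y ihy =>
    have hchains (x : ℕ) := encard_chains_of_encard_chainsToOne (ihy x) z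
    induction x with
    | zero => simpa [chainsToOne_zero_succ, encard_append_singleton_image] using hchains 0
    | succ x ihx =>
      have hdisj : Disjoint ((· ++ [twoOne]) '' chainsToOne x (y + 1) z)
          ((· ++ [threeOne]) '' chains (x + 1) y z) := by
        rw [Set.disjoint_left]
        rintro _ ⟨l, -, rfl⟩ ⟨l', -, h⟩
        simp at h
      rw [chainsToOne_succ_succ, Set.encard_union_eq hdisj, encard_append_singleton_image,
        encard_append_singleton_image, ihx, hchains, ← Nat.cast_add, ← add_mul,
        show x + 1 + (y + 1) = x + (y + 1) + 1 by ring, Nat.choose_succ_succ,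
        show x + 1 + y = x + (y + 1) by ring]

theorem ncard_chainsToOne :
    (chainsToOne x y z).ncard = (x + y).choose x * y.multichoose z := by
  rw [Set.ncard, encard_chainsToOne, ENat.toNat_natCast]

theorem ncard_chains : (chains x y z).ncard = (x + y).choose x * (y + 1).multichoose z := by
  rw [Set.ncard, encard_chains_of_encard_chainsToOne (encard_chainsToOne x y), ENat.toNat_natCast]

end Counting

theorem word_cons (e : Descent) (l : List Descent) :
    word (e :: l) = e.top :: e.bottom :: word l := by
  simp [word]

theorem eq_of_top_eq_of_bottom_eq {e e' : Descent} (htop : e.top = e'.top)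
    (hbottom : e.bottom = e'.bottom) : e = e' := by
  cases e <;> cases e' <;> simp_all [top, bottom]

theorem word_injective : Injective word := by
  intro l
  induction l with
  | nil => rintro (_ | ⟨e', l'⟩) h <;> simp_all [word]
  | cons e l ih =>
    rintro (_ | ⟨e', l'⟩) h
    · simp [word] at h
    · simp only [word_cons, List.cons.injEq] at h
      rw [eq_of_top_eq_of_bottom_eq h.1 h.2.1, ih h.2.2]

theorem exists_append_one_eq_word_iff {l : List Descent} (hl : l ≠ []) :
    (∃ w, w ++ [1] = word l) ↔ threeTwo ∉ l.getLast? := by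
  obtain ⟨l, e, rfl⟩ := l.eq_nil_or_concat'.resolve_left hl
  have hword : word (l ++ [e]) = (word l ++ [e.top]) ++ [e.bottom] := by simp [word]
  simp only [hword, List.append_singleton_inj, exists_eq_left, List.getLast?_concat]
  cases e <;> simp [bottom]

theorem count_one_word (l : List Descent) :
    (word l).count 1 = l.count twoOne + l.count threeOne := by
  induction l with
  | nil => rfl
  | cons e l ih => cases e <;> grind [word_cons, top, bottom]

theorem count_two_word (l : List Descent) :
    (word l).count 2 = l.count twoOne + l.count threeTwo := by
  induction l with
  | nil => rfl
  | cons e l ih => cases e <;> grind [word_cons, top, bottom]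

theorem count_three_word (l : List Descent) :
    (word l).count 3 = l.count threeOne + l.count threeTwo := by
  induction l with
  | nil => rfl
  | cons e l ih => cases e <;> grind [word_cons, top, bottom]

theorem length_word (l : List Descent) : (word l).length = 2 * l.length := by
  simp [word, mul_comm]

theorem head?_word (l : List Descent) : (word l).head? = l.head?.map top := by
  cases l <;> simp [word]

end Descent

/-- The words over `{1,2,3}` that encode reflection paths: alternating, and empty or starting
with a letter `≥ 2`. -/
def IsReflectionWord (w : List ℕ) : Prop :=
  (∀ x ∈ w, 1 ≤ x ∧ x ≤ 3) ∧ DownUpAlt w ∧ (w = [] ∨ 2 ≤ w.headI)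

theorem downUpAlt_cons_cons (a b : ℕ) (w : List ℕ) :
    DownUpAlt (a :: b :: w) ↔ b < a ∧ (∀ c ∈ w.head?, b < c) ∧ DownUpAlt w := by
  rw [DownUpAlt, ← Nat.and_forall_add_one, ← Nat.and_forall_add_one]
  cases w <;> simp [DownUpAlt, add_assoc]

theorem isReflectionWord_nil : IsReflectionWord [] := by
  simp [IsReflectionWord, DownUpAlt]

theorem isReflectionWord_singleton (a : ℕ) : IsReflectionWord [a] ↔ a = 2 ∨ a = 3 := by
  have hAlt : DownUpAlt [a] := by simp [DownUpAlt]
  simp only [IsReflectionWord, hAlt, List.forall_mem_singleton, List.cons_ne_nil, List.headI_cons,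
    true_and, false_or]
  omega

theorem isReflectionWord_cons_cons (a b : ℕ) (w : List ℕ) :
    IsReflectionWord (a :: b :: w) ↔
      1 ≤ b ∧ b < a ∧ a ≤ 3 ∧ (∀ c ∈ w.head?, b < c) ∧ IsReflectionWord w := by
  have htail (hb : 1 ≤ b) (hw : ∀ c ∈ w.head?, b < c) : w = [] ∨ 2 ≤ w.headI := by
    cases w with
    | nil => exact .inl rfl
    | cons c w => exact .inr (hb.trans_lt (hw c rfl))
  simp only [IsReflectionWord, downUpAlt_cons_cons, List.forall_mem_cons, List.headI_cons]
  grind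

theorem IsReflectionWord.length_eq {w : List ℕ} (hw : IsReflectionWord w) :
    w.length = w.count 1 + w.count 2 + w.count 3 := by
  have hsum := Multiset.sum_count_eq_card (s := {1, 2, 3}) (m := (w : Multiset ℕ)) fun x hx => by
    obtain ⟨h1, h3⟩ := hw.1 x (Multiset.mem_coe.1 hx)
    interval_cases x <;> simp
  simpa [add_assoc] using hsum.symm

theorem isReflectionWord_append_one : ∀ {w : List ℕ}, Odd w.length →
    (IsReflectionWord (w ++ [1]) ↔ IsReflectionWord w)
  | [], h => by simp at h
  | [a], _ => by
    simp only [List.singleton_append, isReflectionWord_cons_cons, isReflectionWord_singleton,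
      isReflectionWord_nil, List.head?_nil, Option.not_mem_none, false_imp_iff, implies_true,
      and_true]
    omega
  | a :: b :: w, h => by
    have hw : Odd w.length := by simpa [Nat.odd_add_one] using h
    obtain ⟨c, w, rfl⟩ := List.exists_cons_of_length_pos hw.pos
    simp only [List.cons_append, isReflectionWord_cons_cons a b, List.head?_cons,
      ← isReflectionWord_append_one hw]

theorem isReflectionWord_word (l : List Descent) : IsReflectionWord (Descent.word l) ↔
    Descent.IsAlternating l := by
  induction l with
  | nil => simp [Descent.word, Descent.IsAlternating, isReflectionWord_nil]
  | cons e l ih =>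
    have he : 1 ≤ e.bottom ∧ e.bottom < e.top ∧ e.top ≤ 3 := by
      cases e <;> simp [Descent.top, Descent.bottom]
    simp [Descent.word_cons, isReflectionWord_cons_cons, he, ih, Descent.head?_word,
      Descent.IsAlternating, List.isChain_cons]

theorem IsReflectionWord.exists_word_eq : ∀ {w : List ℕ}, IsReflectionWord w → Even w.length →
    ∃ l, Descent.word l = w
  | [], _, _ => ⟨[], rfl⟩
  | [a], _, h => by simp at h
  | a :: b :: w, hw, h => by
    obtain ⟨hb, hba, ha, -, hw⟩ := (isReflectionWord_cons_cons a b w).1 hw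
    obtain ⟨l, rfl⟩ := hw.exists_word_eq (by simpa [Nat.even_add_one] using h)
    obtain ⟨e, rfl, rfl⟩ : ∃ e : Descent, e.top = a ∧ e.bottom = b := by
      obtain ⟨rfl, rfl⟩ | ⟨rfl, rfl⟩ | ⟨rfl, rfl⟩ :
          (a = 2 ∧ b = 1) ∨ (a = 3 ∧ b = 1) ∨ (a = 3 ∧ b = 2) := by omega
      exacts [⟨.twoOne, rfl, rfl⟩, ⟨.threeOne, rfl, rfl⟩, ⟨.threeTwo, rfl, rfl⟩]
    exact ⟨e :: l, Descent.word_cons e l⟩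

/-- The words counted by `N3 n i j`. -/
def reflectionWords (n i j : ℕ) : Set (List ℕ) :=
  {w | IsReflectionWord w ∧ w.count 1 = n ∧ w.count 2 = i ∧ w.count 3 = j}

theorem N3_natCast (n i j : ℕ) : N3 n i j = (reflectionWords n i j).ncard := by
  rw [N3, ← Nat.card_coe_set_eq]
  refine Nat.card_congr (Equiv.subtypeEquivRight fun w => ?_)
  simp only [reflectionWords, IsReflectionWord, Set.mem_ofPred_eq, Nat.cast_inj, and_assoc]

theorem word_mem_reflectionWords (x y z : ℕ) (l : List Descent) :
    Descent.word l ∈ reflectionWords (x + y) (x + z) (y + z) ↔ l ∈ Descent.chains x y z := by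
  simp only [reflectionWords, Descent.chains, Set.mem_ofPred_eq, isReflectionWord_word,
    Descent.count_one_word, Descent.count_two_word, Descent.count_three_word]
  exact and_congr_right fun _ => by omega

theorem reflectionWords_eq_image_word (x y z : ℕ) :
    reflectionWords (x + y) (x + z) (y + z) = Descent.word '' Descent.chains x y z := by
  ext w
  constructor
  · intro hw
    have heven : Even w.length := by
      rw [hw.1.length_eq, hw.2.1, hw.2.2.1, hw.2.2.2]
      exact ⟨x + y + z, by ring⟩
    obtain ⟨l, rfl⟩ := hw.1.exists_word_eq heven
    exact ⟨l, (word_mem_reflectionWords x y z l).1 hw, rfl⟩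
  · rintro ⟨l, hl, rfl⟩
    exact (word_mem_reflectionWords x y z l).2 hl

theorem append_one_mem_reflectionWords {n i j : ℕ} {w : List ℕ} (hw : Odd w.length) :
    w ++ [1] ∈ reflectionWords (n + 1) i j ↔ w ∈ reflectionWords n i j := by
  simp [reflectionWords, isReflectionWord_append_one hw]

theorem image_append_one_reflectionWords {n x y : ℕ} (h : x + y = n + 1) (z : ℕ) :
    (· ++ [1]) '' reflectionWords n (x + z) (y + z) =
      Descent.word '' Descent.chainsToOne x y z := by
  have ne_nil {l : List Descent} (hl : l ∈ Descent.chains x y z) : l ≠ [] := by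
    rintro rfl
    obtain ⟨-, rfl, rfl, -⟩ := hl
    simp at h
  ext v
  constructor
  · rintro ⟨w, hw, rfl⟩
    have hodd : Odd w.length := by
      rw [hw.1.length_eq, hw.2.1, hw.2.2.1, hw.2.2.2]
      exact ⟨n + z, by omega⟩
    have hw1 : w ++ [1] ∈ reflectionWords (x + y) (x + z) (y + z) :=
      h ▸ (append_one_mem_reflectionWords hodd).2 hw
    obtain ⟨l, hl, hlw⟩ := reflectionWords_eq_image_word x y z ▸ hw1
    exact ⟨l, ⟨hl, (Descent.exists_append_one_eq_word_iff (ne_nil hl)).1 ⟨w, hlw.symm⟩⟩, hlw⟩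
  · rintro ⟨l, hl, rfl⟩
    obtain ⟨w, hlw⟩ := (Descent.exists_append_one_eq_word_iff (ne_nil hl.1)).2 hl.2
    have hodd : Odd w.length := by
      have := congrArg List.length hlw
      rw [Descent.length_word, List.length_append, List.length_singleton] at this
      exact ⟨l.length - 1, by omega⟩
    refine ⟨w, (append_one_mem_reflectionWords hodd).1 ?_, hlw⟩
    rw [hlw, ← h]
    exact (word_mem_reflectionWords x y z l).2 hl.1

theorem N3_of_add_eq {n x y : ℕ} (h : x + y = n) (z : ℕ) :
    N3 n (x + z) (y + z) = (x + y).choose x * (y + 1).multichoose z := by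
  rw [← Nat.cast_add, ← Nat.cast_add, N3_natCast, ← h, reflectionWords_eq_image_word,
    Set.ncard_image_of_injective _ Descent.word_injective, Descent.ncard_chains]

theorem N3_of_add_eq_succ {n x y : ℕ} (h : x + y = n + 1) (z : ℕ) :
    N3 n (x + z) (y + z) = (x + y).choose x * y.multichoose z := by
  rw [← Nat.cast_add, ← Nat.cast_add, N3_natCast,
    ← Set.ncard_image_of_injective _ (List.append_left_injective [1]),
    image_append_one_reflectionWords h,
    Set.ncard_image_of_injective _ Descent.word_injective, Descent.ncard_chainsToOne]

theorem fwdDiff_iter_multichoose_zero (k j : ℕ) :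
    (fwdDiff 1)^[j] (fun m ↦ (k + 1).multichoose m : ℕ → ℤ) 0 = k.choose j := by
  have newton : (fun m ↦ (k + 1).multichoose m : ℕ → ℤ) =
      ∑ i ∈ Finset.range (k + 1), (k.choose i : ℤ) • fun m ↦ (m.choose i : ℤ) := by
    funext m
    have hvandermonde : (k + 1).multichoose m =
        ∑ i ∈ Finset.range (k + 1), k.choose i * m.choose i := by
      rw [Nat.multichoose_eq, show k + 1 + m - 1 = m + k by omega, Nat.choose_symm_add,
        Nat.add_choose_eq, Finset.Nat.sum_antidiagonal_eq_sum_range_succ_mk]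
      refine Finset.sum_congr rfl fun i hi => ?_
      rw [Nat.choose_symm (Finset.mem_range_succ_iff.1 hi), mul_comm]
    simp [hvandermonde]
  calc (fwdDiff 1)^[j] (fun m ↦ (k + 1).multichoose m : ℕ → ℤ) 0
      = ∑ i ∈ Finset.range (k + 1), (k.choose i : ℤ) * if j = i then 1 else 0 := by
        simp only [newton, fwdDiff_iter_finsetSum, Finset.sum_apply, fwdDiff_iter_const_smul,
          Pi.smul_apply, fwdDiff_iter_choose_zero, smul_eq_mul]
    _ = k.choose j := by
        simp +contextual [Nat.choose_eq_zero_of_lt]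

theorem stmt15_general (n : ℕ) (d : ℤ) (hd1 : -(n : ℤ) ≤ d) (hd2 : d ≤ (n : ℤ) + 1) :
    let s : ℤ := if (2 : ℤ) ∣ (d - n) then (n : ℤ) else (n : ℤ) + 1
    let k : ℕ := (((n : ℤ) + d) / 2).toNat
    let f : ℕ → ℤ := fun m : ℕ => (N3 (n : ℤ) ((s - d) / 2 + m) ((s + d) / 2 + m) : ℤ)
    ∀ j : ℕ, fdiff^[j] f 0 = f 0 * (Nat.choose k j : ℤ) := by
  intro s k f j
  obtain ⟨x, y, hx, hy, hxy⟩ : ∃ x y : ℕ, (s - d) / 2 = x ∧ (s + d) / 2 = y ∧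
      ((x + y = n ∧ y = k) ∨ (x + y = n + 1 ∧ y = k + 1)) := by
    refine ⟨((s - d) / 2).toNat, ((s + d) / 2).toNat, ?_⟩
    simp only [s, k]
    split_ifs <;> omega
  have hf : f = ((x + y).choose x : ℤ) • fun m ↦ ((k + 1).multichoose m : ℤ) := by
    funext m
    simp only [f, hx, hy, Pi.smul_apply, smul_eq_mul]
    obtain ⟨hn, hk⟩ | ⟨hn, hk⟩ := hxy
    · rw [← hk, N3_of_add_eq hn, Nat.cast_mul]
    · rw [← hk, N3_of_add_eq_succ hn, Nat.cast_mul]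
  have hfdiff : fdiff = fwdDiff 1 := rfl
  rw [hfdiff, hf, fwdDiff_iter_const_smul, Pi.smul_apply, fwdDiff_iter_multichoose_zero]
  simp

theorem stmt15 (n : ℕ) (d : ℤ) (hd1 : -(n : ℤ) ≤ d) (hd2 : d ≤ (n : ℤ) + 1) :
    let s : ℤ := if (2 : ℤ) ∣ (d - n) then (n : ℤ) else (n : ℤ) + 1
    let k : ℕ := (((n : ℤ) + d) / 2).toNat
    let f : ℕ → ℤ := fun m : ℕ => (N3 (n : ℤ) ((s - d) / 2 + m) ((s + d) / 2 + m) : ℤ)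
    ∀ j : ℕ, j ≤ k → fdiff^[j] f 0 = f 0 * (Nat.choose k j : ℤ) :=
  fun j _ => stmt15_general n d hd1 hd2 j
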